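/- Let F be a reduced convex foliation of degree d ≥ 1 on ℙ²(ℂ) (so F admits 3d pairwise non-proportional invariant lines) and let {ℓ = 0} be one of its invariant lines. Then F has exactly d+1 singular points on the line {ℓ = 0}, and Σ_s (σ(F,s) − 1) = 3d − 1, where the sum ranges over the singular points s of F lying on {ℓ = 0} and σ(F,s) denotes the number of the 3d invariant lines of F passing through s. -/

import Mathlib

open MvPolynomial

noncomputable section

/-- Polynomials in three variables `x = X 0`, `y = X 1`, `z = X 2` over `ℂ`. -/
abbrev P3 : Type := MvPolynomial (Fin 3) ℂ

/-- The linear form `αx + βy + γz` with coefficient vector `l = (α, β, γ)`. -/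
def lin (l : Fin 3 → ℂ) : P3 := C (l 0) * X 0 + C (l 1) * X 1 + C (l 2) * X 2

/-- The line `{αx + βy + γz = 0}` is invariant by the foliation defined by
`ω = a dx + b dy + c dz`: the linear form divides the coefficients of `ω ∧ dℓ`. -/
def InvLine (a b c : P3) (l : Fin 3 → ℂ) : Prop :=
  l ≠ 0 ∧
  lin l ∣ (C (l 1) * a - C (l 0) * b) ∧
  lin l ∣ (C (l 2) * a - C (l 0) * c) ∧
  lin l ∣ (C (l 2) * b - C (l 1) * c)

/-- `(a, b, c)` defines a foliation of degree `d` on `ℙ²(ℂ)`: homogeneous of degree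
`d+1`, without common factor, satisfying the Euler condition. -/
def IsFoliation (d : ℕ) (a b c : P3) : Prop :=
  a.IsHomogeneous (d + 1) ∧ b.IsHomogeneous (d + 1) ∧ c.IsHomogeneous (d + 1) ∧
  (∀ p : P3, p ∣ a → p ∣ b → p ∣ c → IsUnit p) ∧
  X 0 * a + X 1 * b + X 2 * c = 0

/-- Points of the complex projective plane. -/
abbrev PP2 : Type := Projectivization ℂ (Fin 3 → ℂ)

/-- `p` is a singular point of the foliation defined by `ω = a dx + b dy + c dz`. -/
def IsSingOn (a b c : P3) (p : PP2) : Prop :=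
  eval p.rep a = 0 ∧ eval p.rep b = 0 ∧ eval p.rep c = 0

/-- The point `p` lies on the line with coefficient vector `l`. -/
def OnLine (l : Fin 3 → ℂ) (p : PP2) : Prop := ∑ j, l j * p.rep j = 0


/-- Foliation condition, indexed form. -/
def Fol (d : ℕ) (w : Fin 3 → P3) : Prop :=
  (∀ i, (w i).IsHomogeneous (d + 1)) ∧ (∀ p : P3, (∀ i, p ∣ w i) → IsUnit p) ∧
  ∑ i, X i * w i = 0

/-- Invariance of a line, indexed form. -/
def Inv3 (w : Fin 3 → P3) (l : Fin 3 → ℂ) : Prop :=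
  l ≠ 0 ∧ ∀ i j, lin l ∣ C (l i) * w j - C (l j) * w i

lemma lin_eq_sum (l : Fin 3 → ℂ) : lin l = ∑ i, C (l i) * X i := by
  simp [lin, Fin.sum_univ_three]

lemma eval_lin (l p : Fin 3 → ℂ) : eval p (lin l) = ∑ i, l i * p i := by
  simp [lin_eq_sum]

lemma lin_homog (l : Fin 3 → ℂ) : (lin l).IsHomogeneous 1 := by
  rw [lin_eq_sum]
  exact IsHomogeneous.sum _ _ _ fun i _ => isHomogeneous_C_mul_X _ _

lemma coeff_lin (l : Fin 3 → ℂ) (i : Fin 3) : coeff (Finsupp.single i 1) (lin l) = l i := by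
  rw [lin_eq_sum, coeff_sum]
  simp only [coeff_C_mul, coeff_X]
  rw [Finset.sum_eq_single i]
  · simp
  · intro j _ hj
    simp [Finsupp.single_left_inj, hj]
  · simp

lemma lin_ne_zero {l : Fin 3 → ℂ} (h : l ≠ 0) : lin l ≠ 0 := by
  intro h0
  apply h
  funext i
  rw [← coeff_lin l i, h0]; simp

lemma lin_prime {l : Fin 3 → ℂ} (h : l ≠ 0) : Prime (lin l) := by
  rw [← irreducible_iff_prime]
  apply irreducible_of_totalDegree_eq_one
  · exact (lin_homog l).totalDegree (lin_ne_zero h)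
  · intro x hx
    obtain ⟨i, hi⟩ := Function.ne_iff.mp h
    have := hx (Finsupp.single i 1)
    rw [coeff_lin] at this
    rw [isUnit_iff_ne_zero]
    rintro rfl
    exact hi (zero_dvd_iff.mp this)

lemma smul_of_lin_dvd {l m : Fin 3 → ℂ} (h : lin l ∣ lin m) (hm : m ≠ 0) : ∃ t : ℂ, m = t • l := by
  obtain ⟨q, hq⟩ := h
  have hm' := lin_ne_zero hm
  have hl : lin l ≠ 0 := by rintro h; simp [h] at hq; exact hm' hq
  have hq0 : q ≠ 0 := by rintro h; simp [h] at hq; exact hm' hq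
  have h1 := (lin_homog m).totalDegree hm'
  have h2 := (lin_homog l).totalDegree hl
  have h3 := totalDegree_mul_of_isDomain hl hq0
  rw [← hq] at h3
  have h4 : q.totalDegree = 0 := by omega
  rw [totalDegree_eq_zero_iff_eq_C] at h4
  refine ⟨coeff 0 q, ?_⟩
  funext i
  rw [h4, mul_comm] at hq
  rw [← coeff_lin m, hq, coeff_C_mul, coeff_lin]
  simp

/-- product of pairwise nonproportional lines dividing f divides f -/
lemma prod_lin_dvd {ι : Type*} (s : Finset ι) (L : ι → Fin 3 → ℂ)
    (h0 : ∀ i ∈ s, L i ≠ 0) (hnp : ∀ i ∈ s, ∀ j ∈ s, i ≠ j → ∀ t : ℂ, L i ≠ t • L j)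
    (f : P3) (hf : ∀ i ∈ s, lin (L i) ∣ f) : ∏ i ∈ s, lin (L i) ∣ f := by
  classical
  induction s using Finset.induction_on with
  | empty => simp
  | insert a s ha ih =>
    obtain ⟨g, hg⟩ := ih (fun i hi => h0 i (Finset.mem_insert_of_mem hi))
      (fun i hi j hj => hnp i (Finset.mem_insert_of_mem hi) j (Finset.mem_insert_of_mem hj))
      (fun i hi => hf i (Finset.mem_insert_of_mem hi))
    have hp := lin_prime (h0 a (Finset.mem_insert_self _ _))
    have h1 := hf a (Finset.mem_insert_self _ _)
    rw [hg] at h1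
    rcases hp.dvd_or_dvd h1 with h | h
    · exfalso
      obtain ⟨j, hj, hj'⟩ := (Prime.dvd_finsetProd_iff hp _).mp h
      obtain ⟨t, ht⟩ := smul_of_lin_dvd hj' (h0 j (Finset.mem_insert_of_mem hj))
      exact hnp j (Finset.mem_insert_of_mem hj) a (Finset.mem_insert_self _ _)
        (by rintro rfl; exact ha hj) t ht
    · rw [Finset.prod_insert ha, hg, mul_comm]
      exact mul_dvd_mul_left _ h

lemma prod_lin_ne_zero {ι : Type*} (s : Finset ι) (L : ι → Fin 3 → ℂ)
    (h0 : ∀ i ∈ s, L i ≠ 0) : ∏ i ∈ s, lin (L i) ≠ 0 :=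
  Finset.prod_ne_zero_iff.mpr fun i hi => lin_ne_zero (h0 i hi)

lemma prod_lin_deg {ι : Type*} (s : Finset ι) (L : ι → Fin 3 → ℂ)
    (h0 : ∀ i ∈ s, L i ≠ 0) : (∏ i ∈ s, lin (L i)).totalDegree = s.card := by
  have := IsHomogeneous.prod s (fun i => lin (L i)) (fun _ => 1) (fun i _ => lin_homog _)
  simpa using this.totalDegree (prod_lin_ne_zero s L h0)

/-- Substitution congruent modulo an element. -/
lemma dvd_sub_aeval (m : P3) (g : Fin 3 → P3) (hg : ∀ i, m ∣ X i - g i) (f : P3) :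
    m ∣ f - aeval g f := by
  rw [← Ideal.mem_span_singleton, ← Ideal.Quotient.eq]
  have : (Ideal.Quotient.mkₐ ℂ (Ideal.span {m})) =
      (Ideal.Quotient.mkₐ ℂ (Ideal.span {m})).comp (aeval g) := by
    apply MvPolynomial.algHom_ext
    intro i
    simp only [AlgHom.comp_apply, aeval_X, Ideal.Quotient.mkₐ_eq_mk]
    rw [Ideal.Quotient.eq, Ideal.mem_span_singleton]
    exact hg i
  exact congrArg (fun φ => φ f) this

lemma eval_aeval (g : Fin 3 → P3) (p : Fin 3 → ℂ) (f : P3) :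
    eval p (aeval g f) = eval (fun i => eval p (g i)) f := by
  have : (eval p).comp (aeval g : P3 →ₐ[ℂ] P3).toRingHom = eval (fun i => eval p (g i)) := by
    apply MvPolynomial.ringHom_ext <;> intro i <;> simp
  exact congrArg (fun φ => φ f) this

/-- A polynomial vanishing on a line is divisible by its equation. -/
lemma lin_dvd_of_vanish {l : Fin 3 → ℂ} (hl : l ≠ 0) (f : P3)
    (hf : ∀ p : Fin 3 → ℂ, ∑ i, l i * p i = 0 → eval p f = 0) : lin l ∣ f := by
  obtain ⟨i, hi⟩ := Function.ne_iff.mp hl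
  simp only [Pi.zero_apply] at hi
  set g : Fin 3 → P3 := fun j => X j - (if j = i then C (l i)⁻¹ * lin l else 0) with hg
  have h1 := dvd_sub_aeval (lin l) g (by
    intro j
    by_cases h : j = i <;> simp [hg, h]) f
  have h2 : aeval g f = 0 := by
    apply MvPolynomial.funext
    intro p
    rw [eval_aeval, map_zero]
    apply hf
    have e : ∀ j, eval p (g j) = p j - (if j = i then (l i)⁻¹ * ∑ k, l k * p k else 0) := by
      intro j
      by_cases h : j = i <;> simp [hg, h, eval_lin]
    simp only [e, mul_sub, Finset.sum_sub_distrib, mul_ite, mul_zero, Finset.sum_ite_eq',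
      Finset.mem_univ, if_true]
    field_simp
    simp
  rwa [h2, sub_zero] at h1

/-- contraction of the form with a vector tangent to an invariant line -/
lemma lin_dvd_contr {w : Fin 3 → P3} {l : Fin 3 → ℂ} (h : Inv3 w l) (u : Fin 3 → ℂ)
    (hu : ∑ i, l i * u i = 0) : lin l ∣ ∑ j, C (u j) * w j := by
  obtain ⟨hl, h⟩ := h
  obtain ⟨i, hi⟩ := Function.ne_iff.mp hl
  simp only [Pi.zero_apply] at hi
  have e : ∑ j, C (u j) * w j
      = C (l i)⁻¹ * ∑ j, C (u j) * (C (l i) * w j - C (l j) * w i) := by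
    have h1 : (∑ j, C (u j) * (C (l i) * w j - C (l j) * w i) : P3)
        = C (l i) * (∑ j, C (u j) * w j) - C (∑ j, l j * u j) * w i := by
      simp only [Fin.sum_univ_three, C_add, C_mul]
      ring
    rw [h1, hu, map_zero, zero_mul, sub_zero, ← mul_assoc, ← C_mul, inv_mul_cancel₀ hi]
    simp
  rw [e]
  exact Dvd.dvd.mul_left (Finset.dvd_sum fun j _ => Dvd.dvd.mul_left (h i j) _) _

lemma homog_of_X_mul {f : P3} {n : ℕ} (i : Fin 3) (h : (X i * f).IsHomogeneous (n + 1)) :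
    f.IsHomogeneous n := by
  intro m hm
  have := h (d := Finsupp.single i 1 + m) (by rwa [coeff_X_mul])
  simp at this
  rw [Finsupp.weight_single] at this
  simp at this
  omega

lemma eval_smul_homog {f : P3} {n : ℕ} (h : f.IsHomogeneous n) (t : ℂ) (p : Fin 3 → ℂ) :
    eval (t • p) f = t ^ n * eval p f := by
  rw [eval_eq', eval_eq', Finset.mul_sum]
  refine Finset.sum_congr rfl fun m hm => ?_
  have h1 := h.degree_eq_sum_deg_support hm
  have h2 : ∑ i, m i = n := by
    rw [h1]
    exact (Finset.sum_subset (Finset.subset_univ _) (by simp)).symm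
  simp only [Pi.smul_apply, smul_eq_mul, mul_pow, Finset.prod_mul_distrib]
  rw [Finset.prod_pow_eq_pow_sum, h2]
  ring

lemma chain_rule (g : Fin 3 → Polynomial ℂ) (f : P3) :
    Polynomial.derivative (aeval g f) =
      ∑ i, aeval g (pderiv i f) * Polynomial.derivative (g i) := by
  induction f using MvPolynomial.induction_on with
  | C a => simp
  | add p q hp hq =>
    simp only [map_add, hp, hq, add_mul, Finset.sum_add_distrib]
  | mul_X p i hp =>
    have e : ∀ j, pderiv j (p * X i) = p * (Pi.single i 1 : Fin 3 → P3) j + pderiv j p * X i := by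
      intro j
      rw [pderiv_mul, pderiv_X]
      ring_nf
      congr 2
      by_cases h : i = j
      · subst h; simp
      · simp [h, Ne.symm h]
    simp only [map_mul, aeval_X, Polynomial.derivative_mul, hp, e, map_add, add_mul,
      Finset.sum_add_distrib]
    have e2 : ∑ x, (aeval g p * aeval g ((Pi.single i 1 : Fin 3 → P3) x)) *
        Polynomial.derivative (g x) = aeval g p * Polynomial.derivative (g i) := by
      rw [Finset.sum_eq_single i]
      · simp
      · intro j _ hj
        simp [hj]
      · simp
    rw [e2, Finset.sum_mul, add_comm]
    refine congrArg₂ (· + ·) rfl (Finset.sum_congr rfl fun j _ => ?_)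
    rw [mul_right_comm]

lemma univ_zero (D P : Polynomial ℂ) (h : D ∣ P ^ 2 * Polynomial.derivative D)
    (h0 : D.eval 0 = 0) (hP : P.eval 0 ≠ 0) : D = 0 := by
  by_contra hD
  have hr : D.IsRoot 0 := h0
  have hm := Polynomial.derivative_rootMultiplicity_of_root hr
  have hpos := (Polynomial.rootMultiplicity_pos hD).mpr hr
  have hD' : Polynomial.derivative D ≠ 0 := by
    intro h'
    have := Polynomial.derivative_eq_zero.mp h'
    rw [Polynomial.natDegree_eq_zero] at this
    obtain ⟨x, rfl⟩ := this
    simp at h0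
    simp [h0] at hD
  have h1 : (Polynomial.X - Polynomial.C (0:ℂ)) ^ D.rootMultiplicity 0 ∣
      P ^ 2 * Polynomial.derivative D := (Polynomial.pow_rootMultiplicity_dvd D 0).trans h
  have h2 := (Polynomial.prime_X_sub_C (0:ℂ)).pow_dvd_of_dvd_mul_left _ (by
    intro h3
    have h4 := (Polynomial.prime_X_sub_C (0:ℂ)).dvd_of_dvd_pow h3
    rw [Polynomial.dvd_iff_isRoot] at h4
    exact hP h4) h1
  rw [← Polynomial.le_rootMultiplicity_iff hD'] at h2
  omega

lemma eval_line (f : P3) (p v : Fin 3 → ℂ) (t : ℂ) :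
    Polynomial.eval t (aeval (fun i => Polynomial.C (p i) + Polynomial.X * Polynomial.C (v i)) f)
      = eval (p + t • v) f := by
  have : (Polynomial.evalRingHom t).comp (aeval (fun i => Polynomial.C (p i) +
      Polynomial.X * Polynomial.C (v i)) : P3 →ₐ[ℂ] Polynomial ℂ).toRingHom
      = eval (p + t • v) := by
    apply MvPolynomial.ringHom_ext
    · intro i; simp
    · intro i; simp; ring
  exact congrArg (fun φ => φ f) this

/-- The extactic (inflection) polynomial of the affine field `A ∂x + B ∂y`. -/
def GG (A B : P3) : P3 :=
  A * (A * pderiv 0 B + B * pderiv 1 B) - B * (A * pderiv 0 A + B * pderiv 1 A)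

lemma tangent_dir {d : ℕ} {A B : P3} (hA : A.IsHomogeneous d) (hB : B.IsHomogeneous d)
    (hG : GG A B = 0) (p : Fin 3 → ℂ) (h0 : eval p A ≠ 0) :
    eval p A * eval ![eval p A, eval p B, 0] B = eval p B * eval ![eval p A, eval p B, 0] A := by
  set v0 := eval p A with hv0
  set v1 := eval p B with hv1
  set v : Fin 3 → ℂ := ![v0, v1, 0] with hv
  set g : Fin 3 → Polynomial ℂ :=
    fun i => Polynomial.C (p i) + Polynomial.X * Polynomial.C (v i) with hg
  set f : P3 := C v0 * B - C v1 * A with hf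
  have hfh : f.IsHomogeneous d := (hB.C_mul _).sub (hA.C_mul _)
  have hdg : ∀ i, Polynomial.derivative (g i) = Polynomial.C (v i) := by
    intro i; simp [hg]
  have hD : aeval g f = 0 := by
    apply univ_zero _ (aeval g A)
    · have h1 := congrArg (aeval g) hG
      simp only [GG, map_sub, map_mul, map_add, map_zero] at h1
      have h2 : aeval g f = Polynomial.C v0 * aeval g B - Polynomial.C v1 * aeval g A := by
        simp [hf, Polynomial.algebraMap_eq]
      have h3 : Polynomial.derivative (aeval g f) =
          Polynomial.C v0 * (Polynomial.C v0 * aeval g (pderiv 0 B)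
            + Polynomial.C v1 * aeval g (pderiv 1 B)) -
          Polynomial.C v1 * (Polynomial.C v0 * aeval g (pderiv 0 A)
            + Polynomial.C v1 * aeval g (pderiv 1 A)) := by
        rw [h2]
        simp only [Polynomial.derivative_sub, Polynomial.derivative_C_mul, chain_rule, hdg,
          Fin.sum_univ_three, hv]
        simp
        ring
      rw [h3]
      set V0 := Polynomial.C v0
      set V1 := Polynomial.C v1
      set P := aeval g A
      set Q := aeval g B
      set D := aeval g f
      refine ⟨-V0 * P * aeval g (pderiv 1 B) + V0 * P * aeval g (pderiv 0 A)
        + 2 * V0 * Q * aeval g (pderiv 1 A) - D * aeval g (pderiv 1 A), ?_⟩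
      rw [h2]
      linear_combination V0 ^ 2 * h1
    · rw [hg, eval_line]
      simp [hf, ← hv0, ← hv1]
      ring
    · rw [hg, eval_line]
      simpa [← hv0] using h0
  have hD' : ∀ t : ℂ, eval (p + t • v) f = 0 := by
    intro t
    rw [← eval_line, ← hg, hD]; simp
  have hE : aeval (fun i => Polynomial.C (v i) + Polynomial.X * Polynomial.C (p i)) f
      = (0 : Polynomial ℂ) := by
    apply Polynomial.eq_zero_of_infinite_isRoot
    apply Set.Infinite.mono (s := {0}ᶜ)
    · intro t ht
      have ht : t ≠ 0 := ht
      simp only [Set.mem_ofPred_eq, Polynomial.IsRoot.def]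
      rw [eval_line]
      have : v + t • p = t • (p + t⁻¹ • v) := by
        rw [smul_add, smul_smul, mul_inv_cancel₀ ht, one_smul, add_comm]
      rw [this, eval_smul_homog hfh, hD', mul_zero]
    · exact (Set.finite_singleton _).infinite_compl
  have h5 := eval_line f v p 0
  rw [hE] at h5
  simp [hf] at h5
  linear_combination -h5

lemma X2_eq_lin : (X 2 : P3) = lin ![0, 0, 1] := by simp [lin]
lemma X1_eq_lin : (X 1 : P3) = lin ![0, 1, 0] := by simp [lin]
lemma X0_eq_lin : (X 0 : P3) = lin ![1, 0, 0] := by simp [lin]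

lemma not_isUnit_homog {d : ℕ} (hd : 1 ≤ d) {A : P3} (hA : A.IsHomogeneous d) : ¬ IsUnit A := by
  intro h
  have h1 := hA.totalDegree h.ne_zero
  obtain ⟨B, hB⟩ := h.exists_right_inv
  have h2 := totalDegree_mul_of_isDomain h.ne_zero
    (show B ≠ 0 by rintro rfl; simp at hB)
  rw [hB] at h2
  simp at h2
  omega

lemma GG_ne_zero {d : ℕ} (hd : 1 ≤ d) {A B : P3} (hA : A.IsHomogeneous d)
    (hB : B.IsHomogeneous d) (hcop : ∀ g, g ∣ A → g ∣ B → IsUnit g)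
    (hz : ¬ X 2 ∣ X 0 * B - X 1 * A) : GG A B ≠ 0 := by
  intro hG
  set Q : Polynomial ℂ := aeval (fun i => Polynomial.C ((![1, 0, 0] : Fin 3 → ℂ) i) +
    Polynomial.X * Polynomial.C ((![0, 1, 0] : Fin 3 → ℂ) i)) (X 0 * B - X 1 * A) with hQ
  have hQe : ∀ t, Q.eval t = eval ![1, t, 0] B - t * eval ![1, t, 0] A := by
    intro t
    rw [hQ, eval_line]
    have : (![1, 0, 0] + t • ![0, 1, 0] : Fin 3 → ℂ) = ![1, t, 0] := by
      funext i; fin_cases i <;> simp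
    rw [this]; simp
  have hsc : ∀ (f : P3), f.IsHomogeneous d → ∀ x y : ℂ, x ≠ 0 →
      eval ![x, y, 0] f = x ^ d * eval ![1, y / x, 0] f := by
    intro f hf x y hx
    rw [← eval_smul_homog hf]
    congr 2
    funext i; fin_cases i <;> simp; field_simp
  have hQ0 : Q ≠ 0 := by
    intro h0
    apply hz
    have h1 : lin ![0, 0, 1] ∣ X 0 * (X 0 * B - X 1 * A) := by
      apply lin_dvd_of_vanish
      · intro h; simpa using congrFun h 2
      · intro p hp
        simp [Fin.sum_univ_three] at hp
        have hp' : p = ![p 0, p 1, 0] := by funext i; fin_cases i <;> simp [hp]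
        by_cases hx : p 0 = 0
        · simp [hx]
        · have := hQe (p 1 / p 0)
          rw [h0] at this
          simp only [map_mul, map_sub, eval_X]
          rw [hp', hsc A hA _ _ hx, hsc B hB _ _ hx]
          simp at this ⊢
          right
          field_simp at this
          linear_combination - p 0 ^ d * this
    rw [X2_eq_lin]
    rcases (lin_prime (by intro h; simpa using congrFun h 2)).dvd_or_dvd h1 with h | h
    · exfalso
      rw [X0_eq_lin] at h
      obtain ⟨t, ht⟩ := smul_of_lin_dvd h (by intro h; simpa using congrFun h 0)
      simpa using congrFun ht 0
    · exact h
  have hprod : A * ∏ r ∈ Q.roots.toFinset, (B - C r * A) = 0 := by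
    apply MvPolynomial.funext
    intro p
    rw [map_mul, map_prod, map_zero, mul_eq_zero]
    by_cases h0 : eval p A = 0
    · exact Or.inl h0
    right
    have h1 := tangent_dir hA hB hG p h0
    rw [hsc A hA _ _ h0, hsc B hB _ _ h0] at h1
    rw [Finset.prod_eq_zero_iff]
    refine ⟨eval p B / eval p A, ?_, ?_⟩
    · rw [Multiset.mem_toFinset, Polynomial.mem_roots hQ0, Polynomial.IsRoot.def, hQe]
      have h2 := pow_ne_zero d h0
      have h3 : eval p A * (eval ![1, eval p B / eval p A, 0] B) =
        eval p B * eval ![1, eval p B / eval p A, 0] A := by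
        apply mul_left_cancel₀ h2
        linear_combination h1
      apply mul_left_cancel₀ h0
      rw [mul_sub, h3]; field_simp; ring
    · simp; field_simp; ring
  rcases mul_eq_zero.mp hprod with h | h
  · exact not_isUnit_homog hd hB (hcop B (by rw [h]; exact dvd_zero _) dvd_rfl)
  · obtain ⟨r, _, hr⟩ := Finset.prod_eq_zero_iff.mp h
    refine not_isUnit_homog hd hA (hcop A dvd_rfl ⟨C r, ?_⟩)
    linear_combination hr

lemma pderiv_lin (l : Fin 3 → ℂ) (i : Fin 3) : pderiv i (lin l) = C (l i) := by
  rw [lin_eq_sum, map_sum, Finset.sum_eq_single i]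
  · simp
  · intro j _ hj
    rw [pderiv_C_mul, pderiv_X_of_ne hj]; simp
  · simp

lemma lin_dvd_GG {A B : P3} {l : Fin 3 → ℂ} (hl : l 0 ≠ 0 ∨ l 1 ≠ 0)
    (h : lin l ∣ C (l 0) * A + C (l 1) * B) : lin l ∣ GG A B := by
  obtain ⟨m, hm⟩ := h
  have hd : ∀ i, C (l 0) * pderiv i A + C (l 1) * pderiv i B
      = C (l i) * m + lin l * pderiv i m := by
    intro i
    have := congrArg (pderiv i) hm
    rw [map_add, pderiv_C_mul, pderiv_C_mul, pderiv_mul, pderiv_lin] at this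
    simpa [smul_eq_C_mul] using this
  have d0 := hd 0
  have d1 := hd 1
  have key : ∀ a : ℂ, a ≠ 0 → lin l ∣ C a * GG A B → lin l ∣ GG A B := by
    intro a ha h
    have : GG A B = C a⁻¹ * (C a * GG A B) := by
      rw [← mul_assoc, ← C_mul, inv_mul_cancel₀ ha]; simp
    rw [this]
    exact Dvd.dvd.mul_left h _
  rcases hl with hl | hl
  · apply key _ hl
    refine ⟨m * (A * pderiv 0 B + B * pderiv 1 B)
      - B * (m * m + A * pderiv 0 m + B * pderiv 1 m), ?_⟩
    unfold GG
    linear_combination (A * pderiv 0 B + B * pderiv 1 B - B * m) * hm - B * A * d0 - B * B * d1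
  · apply key _ hl
    refine ⟨A * (m * m + A * pderiv 0 m + B * pderiv 1 m)
      - m * (A * pderiv 0 A + B * pderiv 1 A), ?_⟩
    unfold GG
    linear_combination (A * m - (A * pderiv 0 A + B * pderiv 1 A)) * hm + A * A * d0 + A * B * d1

lemma GG_homog {d : ℕ} (hd : 1 ≤ d) {A B : P3} (hA : A.IsHomogeneous d)
    (hB : B.IsHomogeneous d) : (GG A B).IsHomogeneous (3 * d - 1) := by
  have e : d + (d + (d - 1)) = 3 * d - 1 := by omega
  rw [← e]
  unfold GG
  exact (hA.mul ((hA.mul hB.pderiv).add (hB.mul hB.pderiv))).sub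
    (hB.mul ((hA.mul hA.pderiv).add (hB.mul hA.pderiv)))

/-- restriction to the affine line `y = 0, z = 1` -/
def rho : P3 →ₐ[ℂ] Polynomial ℂ := aeval ![Polynomial.X, 0, 1]

lemma rho_deriv (f : P3) : Polynomial.derivative (rho f) = rho (pderiv 0 f) := by
  unfold rho
  rw [chain_rule]
  simp [Fin.sum_univ_three]

lemma rho_eval (f : P3) (t : ℂ) : (rho f).eval t = eval ![t, 0, 1] f := by
  have : (Polynomial.evalRingHom t).comp rho.toRingHom = eval ![t, 0, 1] := by
    apply MvPolynomial.ringHom_ext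
    · intro i; simp [rho]
    · intro i; fin_cases i <;> simp [rho]
  exact congrArg (fun φ => φ f) this

lemma rho_lin (l : Fin 3 → ℂ) :
    rho (lin l) = Polynomial.C (l 0) * Polynomial.X + Polynomial.C (l 2) := by
  simp [rho, lin, Polynomial.algebraMap_eq]

/-- key univariate estimate -/
lemma univ_dvd (N : ℕ) (A b w : Polynomial ℂ) (hw : Polynomial.X ^ N ∣ w)
    (hA : Polynomial.X ^ 2 ∣ A) :
    Polynomial.X ^ (N + 1) ∣
      A * (b * Polynomial.derivative w - w * Polynomial.derivative b) := by
  obtain ⟨u, rfl⟩ := hw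
  obtain ⟨r, rfl⟩ := hA
  have h : Polynomial.X * Polynomial.derivative (Polynomial.X ^ N * u) =
      Polynomial.X ^ N * (Polynomial.C (N : ℂ) * u + Polynomial.X * Polynomial.derivative u) := by
    rw [Polynomial.derivative_mul, Polynomial.derivative_X_pow]
    rcases N with _ | N
    · simp
    · simp only [Nat.add_sub_cancel]; ring
  refine ⟨r * (b * (Polynomial.C (N : ℂ) * u + Polynomial.X * Polynomial.derivative u)
    - Polynomial.X * u * Polynomial.derivative b), ?_⟩
  linear_combination Polynomial.X * r * b * h

theorem core {d : ℕ} (hd : 1 ≤ d) {w : Fin 3 → P3} (hF : Fol d w)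
    {L : Fin (3 * d) → Fin 3 → ℂ} (hinv : ∀ i, Inv3 w (L i))
    (hnp : ∀ i j, i ≠ j → ∀ t : ℂ, L i ≠ t • L j) {k j : Fin (3 * d)} (hkj : k ≠ j)
    (hk : L k = ![0, 1, 0]) (hj : L j = ![0, 0, 1])
    (hs : eval ![0, 0, 1] (w 1) = 0) : eval ![0, 0, 1] (pderiv 0 (w 1)) ≠ 0 := by
  classical
  intro hs'
  obtain ⟨hh, hcop, heul⟩ := hF
  have hL0 : ∀ i, L i ≠ 0 := fun i => (hinv i).1
  have pz : Prime (X 2 : P3) := X_prime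
  have py : Prime (X 1 : P3) := X_prime
  have hz : (X 2 : P3) ≠ 0 := pz.ne_zero
  have hy : (X 1 : P3) ≠ 0 := py.ne_zero
  have ez : lin (L j) = X 2 := by rw [hj, X2_eq_lin]
  have ey : lin (L k) = X 1 := by rw [hk, X1_eq_lin]
  have nzy : ¬ (X 1 : P3) ∣ X 2 := by
    rw [← ez, ← ey]
    intro h
    obtain ⟨t, ht⟩ := smul_of_lin_dvd h (hL0 j)
    exact hnp j k hkj.symm t ht
  -- factorizations
  have za : X 2 ∣ w 0 := by
    have := (hinv j).2 2 0
    rw [ez] at this; simpa [hj] using this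
  have zb : X 2 ∣ w 1 := by
    have := (hinv j).2 2 1
    rw [ez] at this; simpa [hj] using this
  have ya : X 1 ∣ w 0 := by
    have := (hinv k).2 1 0
    rw [ey] at this; simpa [hk] using this
  obtain ⟨a1, ha1⟩ := za
  obtain ⟨A, hb1⟩ := zb
  have ya1 : X 1 ∣ a1 := by
    rw [ha1] at ya
    exact (py.dvd_or_dvd ya).resolve_left nzy
  obtain ⟨al, hal⟩ := ya1
  set β : P3 := -al with hβ
  set B : P3 := X 1 * β with hB
  have haB : w 0 = - (X 2 * B) := by rw [ha1, hal, hB, hβ]; ring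
  have hAh : A.IsHomogeneous d := homog_of_X_mul 2 (by rw [← hb1]; exact hh 1)
  have hBh : B.IsHomogeneous d := by
    apply homog_of_X_mul 2
    have := (hh 0).neg
    rwa [haB, neg_neg] at this
  set W : P3 := X 0 * β - A with hW
  have hc : w 2 = X 0 * B - X 1 * A := by
    rw [Fin.sum_univ_three, haB, hb1] at heul
    apply mul_left_cancel₀ hz
    linear_combination heul
  have hcW : w 2 = X 1 * W := by rw [hc, hW, hB]; ring
  -- GG nonzero
  have hG : GG A B ≠ 0 := by
    apply GG_ne_zero hd hAh hBh
    · intro g gA gB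
      apply hcop g
      intro i
      fin_cases i
      · show g ∣ w 0
        rw [haB, dvd_neg]; exact Dvd.dvd.mul_left gB _
      · show g ∣ w 1
        rw [hb1]; exact Dvd.dvd.mul_left gA _
      · show g ∣ w 2
        rw [hc]; exact dvd_sub (Dvd.dvd.mul_left gB _) (Dvd.dvd.mul_left gA _)
    · intro h
      rw [← hc] at h
      apply pz.not_isUnit
      apply hcop
      intro i
      fin_cases i
      · show X 2 ∣ w 0
        exact ⟨_, ha1⟩
      · show X 2 ∣ w 1
        exact ⟨_, hb1⟩
      · exact h
  -- lines divide GG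
  have hdvd : ∀ i, i ≠ j → lin (L i) ∣ GG A B := by
    intro i hi
    apply lin_dvd_GG
    · by_contra hcon
      push Not at hcon
      apply hnp i j hi (L i 2)
      funext m
      fin_cases m <;> simp [hj, hcon]
    · have h1 := (hinv i).2 0 1
      rw [haB, hb1] at h1
      have h2 : lin (L i) ∣ X 2 * (C (L i 0) * A + C (L i 1) * B) := by
        convert h1 using 1; ring
      refine ((lin_prime (hL0 i)).dvd_or_dvd h2).resolve_left ?_
      rw [← ez]
      intro h
      obtain ⟨t, ht⟩ := smul_of_lin_dvd h (hL0 j)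
      exact hnp j i hi.symm t ht
  set T : Finset (Fin (3 * d)) := (Finset.univ.erase j).erase k with hT
  have hkT : k ∉ T := by simp [hT]
  have hTi : insert k T = Finset.univ.erase j := by
    rw [hT, Finset.insert_erase]; simp [hkj]
  have hprod : ∏ i ∈ insert k T, lin (L i) ∣ GG A B := by
    apply prod_lin_dvd
    · exact fun i _ => hL0 i
    · exact fun i _ j _ h => hnp i j h
    · intro i hi
      rw [hTi] at hi
      exact hdvd i (Finset.ne_of_mem_erase hi)
  obtain ⟨q, hq⟩ := hprod
  have hq0 : q ≠ 0 := by rintro rfl; simp at hq; exact hG hq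
  have hqdeg : q.totalDegree = 0 := by
    have h1 := totalDegree_mul_of_isDomain
      (prod_lin_ne_zero (insert k T) L (fun i _ => hL0 i)) hq0
    rw [← hq, (GG_homog hd hAh hBh).totalDegree hG, prod_lin_deg _ _ (fun i _ => hL0 i), hTi,
      Finset.card_erase_of_mem (Finset.mem_univ _), Finset.card_univ, Fintype.card_fin] at h1
    omega
  rw [totalDegree_eq_zero_iff_eq_C] at hqdeg
  set κ := coeff 0 q
  have hκ : κ ≠ 0 := by
    intro h; rw [h] at hqdeg; simp at hqdeg; exact hq0 hqdeg
  -- the quotient by y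
  set H : P3 := A * (A * pderiv 0 β + β * (β + X 1 * pderiv 1 β))
    - β * (A * pderiv 0 A + X 1 * β * pderiv 1 A) with hH
  have hGH : GG A B = X 1 * H := by
    have e0 : pderiv 0 B = X 1 * pderiv 0 β := by
      rw [hB, pderiv_mul, pderiv_X_of_ne (by decide)]; ring
    have e1 : pderiv 1 B = β + X 1 * pderiv 1 β := by
      rw [hB, pderiv_mul, pderiv_X_self]; ring
    unfold GG
    rw [e0, e1, hB, hH]; ring
  have hHT : H = (∏ i ∈ T, lin (L i)) * C κ := by
    rw [Finset.prod_insert hkT, ey, hGH, hqdeg] at hq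
    apply mul_left_cancel₀ hy
    rw [hq]; ring
  set T1 := T.filter (fun i => L i 2 = 0) with hT1
  set T2 := T.filter (fun i => ¬ L i 2 = 0) with hT2
  have hsplit : ∏ i ∈ T, lin (L i) = (∏ i ∈ T1, lin (L i)) * ∏ i ∈ T2, lin (L i) :=
    (Finset.prod_filter_mul_prod_filter_not _ _ _).symm
  have hT1r : rho (∏ i ∈ T1, lin (L i)) =
      Polynomial.C (∏ i ∈ T1, L i 0) * Polynomial.X ^ T1.card := by
    rw [map_prod, map_prod, ← Finset.prod_const, ← Finset.prod_mul_distrib]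
    refine Finset.prod_congr rfl fun i hi => ?_
    rw [rho_lin, (Finset.mem_filter.mp hi).2]; simp
  have hμ : ∏ i ∈ T1, L i 0 ≠ 0 := by
    rw [Finset.prod_ne_zero_iff]
    intro i hi h0
    have hi2 := (Finset.mem_filter.mp hi).2
    have hik : i ≠ k := by rintro rfl; exact hkT (Finset.mem_filter.mp hi).1
    apply hnp i k hik (L i 1)
    funext m
    fin_cases m <;> simp [hk, h0, hi2]
  -- lines through s divide W
  have hTW : ∏ i ∈ T1, lin (L i) ∣ W := by
    apply prod_lin_dvd
    · exact fun i _ => hL0 i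
    · exact fun i _ j _ h => hnp i j h
    · intro i hi
      have hi2 := (Finset.mem_filter.mp hi).2
      have hik : i ≠ k := by rintro rfl; exact hkT (Finset.mem_filter.mp hi).1
      have h1 := lin_dvd_contr (hinv i) ![0, 0, 1] (by simp [Fin.sum_univ_three, hi2])
      simp [Fin.sum_univ_three] at h1
      rw [hcW] at h1
      refine ((lin_prime (hL0 i)).dvd_or_dvd h1).resolve_left ?_
      rw [← ey]
      intro h
      obtain ⟨t, ht⟩ := smul_of_lin_dvd h (hL0 k)
      exact hnp k i hik.symm t ht
  have hXW : Polynomial.X ^ T1.card ∣ rho W := by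
    have := map_dvd rho hTW
    rw [hT1r] at this
    exact (Dvd.intro_left _ rfl).trans this
  have hXA : Polynomial.X ^ 2 ∣ rho A := by
    rw [Polynomial.X_pow_dvd_iff]
    intro m hm
    have r1 : rho (w 1) = rho A := by rw [hb1, map_mul]; simp [rho]
    have hm : m = 0 ∨ m = 1 := by omega
    rw [← r1]
    rcases hm with rfl | rfl
    · rw [Polynomial.coeff_zero_eq_eval_zero, rho_eval]; exact hs
    · have := Polynomial.coeff_derivative (rho (w 1)) 0
      rw [rho_deriv, Polynomial.coeff_zero_eq_eval_zero, rho_eval, hs'] at this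
      simpa using this.symm
  have hfin := univ_dvd T1.card (rho A) (rho β) (rho W) hXW hXA
  have hrH : rho H = rho A * (rho β * Polynomial.derivative (rho W)
      - rho W * Polynomial.derivative (rho β)) := by
    have r1 : rho (X 1) = 0 := by simp [rho]
    have r0 : rho (X 0) = Polynomial.X := by simp [rho]
    rw [hH, hW]
    simp only [map_sub, map_mul, map_add, r1, r0,
      Polynomial.derivative_mul, Polynomial.derivative_X, rho_deriv]
    ring
  rw [← hrH, hHT, hsplit, map_mul, map_mul, hT1r, pow_succ] at hfin
  have h1 : Polynomial.X ^ T1.card * Polynomial.X ∣ Polynomial.X ^ T1.card *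
      (Polynomial.C (∏ i ∈ T1, L i 0) * rho (∏ i ∈ T2, lin (L i)) * rho (C κ)) := by
    convert hfin using 1; ring
  rw [mul_dvd_mul_iff_left (pow_ne_zero _ Polynomial.X_ne_zero), Polynomial.X_dvd_iff,
    Polynomial.coeff_zero_eq_eval_zero] at h1
  simp only [Polynomial.eval_mul, Polynomial.eval_C, rho_eval, eval_C, mul_eq_zero,
    hμ, hκ, or_false, false_or] at h1
  rw [map_prod] at h1
  obtain ⟨i, hi, h0⟩ := Finset.prod_eq_zero_iff.mp h1
  rw [eval_lin] at h0
  simp [Fin.sum_univ_three] at h0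
  exact (Finset.mem_filter.mp hi).2 h0

/-- linear substitution -/
def msub (M : Matrix (Fin 3) (Fin 3) ℂ) : P3 →ₐ[ℂ] P3 := aeval (fun i => ∑ j, C (M i j) * X j)

/-- transformed form -/
def wT (M : Matrix (Fin 3) (Fin 3) ℂ) (w : Fin 3 → P3) : Fin 3 → P3 :=
  fun j => ∑ i, C (M i j) * msub M (w i)

lemma msub_C (M : Matrix (Fin 3) (Fin 3) ℂ) (a : ℂ) : msub M (C a) = C a := by
  simp [msub]

lemma eval_sub (M : Matrix (Fin 3) (Fin 3) ℂ) (p : Fin 3 → ℂ) (f : P3) :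
    eval p (msub M f) = eval (M.mulVec p) f := by
  unfold msub
  rw [eval_aeval]
  congr 2
  funext i
  simp [Matrix.mulVec, dotProduct]

lemma msub_msub {M N : Matrix (Fin 3) (Fin 3) ℂ} (h : M * N = 1) (f : P3) :
    msub N (msub M f) = f := by
  apply MvPolynomial.funext
  intro p
  rw [eval_sub, eval_sub, Matrix.mulVec_mulVec, h, Matrix.one_mulVec]

lemma msub_lin (M : Matrix (Fin 3) (Fin 3) ℂ) (l : Fin 3 → ℂ) :
    msub M (lin l) = lin (Matrix.vecMul l M) := by
  apply MvPolynomial.funext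
  intro p
  rw [eval_sub, eval_lin, eval_lin]
  exact Matrix.dotProduct_mulVec l M p

lemma Fol_trans {d : ℕ} {w : Fin 3 → P3} (h : Fol d w) {M N : Matrix (Fin 3) (Fin 3) ℂ}
    (hMN : M * N = 1) (hNM : N * M = 1) : Fol d (wT M w) := by
  obtain ⟨h1, h2, h3⟩ := h
  refine ⟨?_, ?_, ?_⟩
  · intro j
    refine IsHomogeneous.sum _ _ _ fun i _ => IsHomogeneous.C_mul ?_ _
    have := (h1 i).aeval (fun i => ∑ j, C (M i j) * X j) (n := 1) (fun i =>
      IsHomogeneous.sum _ _ _ fun j _ => isHomogeneous_C_mul_X _ _)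
    simpa [msub] using this
  · intro p hp
    have h4 : ∀ m, p ∣ msub M (w m) := by
      intro m
      have : msub M (w m) = ∑ j, C (N j m) * wT M w j := by
        have e : ∀ i, ∑ j, M i j * N j m = (1 : Matrix (Fin 3) (Fin 3) ℂ) i m := by
          intro i; rw [← hMN, Matrix.mul_apply]
        calc msub M (w m) = ∑ i, C (∑ j, M i j * N j m) * msub M (w i) := by
              simp only [e, Matrix.one_apply]
              rw [Finset.sum_eq_single m]
              · simp
              · intro b _ hb; simp [hb]
              · simp
          _ = _ := by
              simp only [wT, Finset.mul_sum, map_sum, Finset.sum_mul]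
              rw [Finset.sum_comm]
              refine Finset.sum_congr rfl fun i _ => Finset.sum_congr rfl fun j _ => ?_
              rw [C_mul]; ring
      rw [this]
      exact Finset.dvd_sum fun j _ => Dvd.dvd.mul_left (hp j) _
    have h5 : IsUnit (msub N p) := by
      apply h2
      intro m
      have := map_dvd (msub N) (h4 m)
      rwa [msub_msub hMN] at this
    have h6 := h5.map (msub M)
    rwa [msub_msub hNM] at h6
  · have h4 := congrArg (msub M) h3
    rw [map_sum, map_zero] at h4
    rw [← h4]
    simp only [wT, Finset.mul_sum, map_mul]
    rw [Finset.sum_comm]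
    refine Finset.sum_congr rfl fun i _ => ?_
    have : msub M (X i) = ∑ j, C (M i j) * X j := by simp [msub]
    rw [this, Finset.sum_mul]
    exact Finset.sum_congr rfl fun j _ => by ring

lemma vecMul_ne {M N : Matrix (Fin 3) (Fin 3) ℂ} (hMN : M * N = 1) {l m : Fin 3 → ℂ}
    (h : Matrix.vecMul l M = Matrix.vecMul m M) : l = m := by
  have := congrArg (fun v => Matrix.vecMul v N) h
  simpa [Matrix.vecMul_vecMul, hMN] using this

lemma Inv_trans {w : Fin 3 → P3} {l : Fin 3 → ℂ} (h : Inv3 w l)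
    {M N : Matrix (Fin 3) (Fin 3) ℂ} (hMN : M * N = 1) :
    Inv3 (wT M w) (Matrix.vecMul l M) := by
  refine ⟨?_, ?_⟩
  · intro h0
    apply h.1
    apply vecMul_ne hMN
    rw [h0, Matrix.zero_vecMul]
  · intro i j
    have e : C (Matrix.vecMul l M i) * wT M w j - C (Matrix.vecMul l M j) * wT M w i =
        ∑ a, ∑ b, C (M a i) * C (M b j) * msub M (C (l a) * w b - C (l b) * w a) := by
      simp only [Matrix.vecMul, dotProduct, wT, Fin.sum_univ_three, map_sub, map_mul, msub_C,
        C_add, C_mul]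
      ring
    rw [e]
    refine Finset.dvd_sum fun a _ => Finset.dvd_sum fun b _ => Dvd.dvd.mul_left ?_ _
    rw [← msub_lin]
    exact map_dvd _ (h.2 a b)

/-- directional derivative -/
def dird (f : P3) (s v : Fin 3 → ℂ) : ℂ := ∑ i, v i * eval s (pderiv i f)

lemma dird_eq (f : P3) (s v : Fin 3 → ℂ) : dird f s v =
    (Polynomial.derivative (aeval (fun i => Polynomial.C (s i) +
      Polynomial.X * Polynomial.C (v i)) f)).eval 0 := by
  rw [chain_rule, Polynomial.eval_finsetSum]
  refine Finset.sum_congr rfl fun i _ => ?_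
  rw [Polynomial.eval_mul, eval_line]
  simp
  ring

lemma dird_sub (M : Matrix (Fin 3) (Fin 3) ℂ) (f : P3) (s v : Fin 3 → ℂ) :
    dird (msub M f) s v = dird f (M.mulVec s) (M.mulVec v) := by
  rw [dird_eq, dird_eq]
  congr 2
  apply Polynomial.funext
  intro t
  rw [eval_line, eval_line, eval_sub, Matrix.mulVec_add, Matrix.mulVec_smul]

lemma exists_frame {l m s : Fin 3 → ℂ} (hm0 : m ≠ 0) (hlm : ∀ t : ℂ, l ≠ t • m)
    (hls : ∑ i, l i * s i = 0) (hms : ∑ i, m i * s i = 1) :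
    ∃ M N : Matrix (Fin 3) (Fin 3) ℂ, M * N = 1 ∧ N * M = 1 ∧
      Matrix.vecMul l M = ![0, 1, 0] ∧ Matrix.vecMul m M = ![0, 0, 1] ∧
      M.mulVec ![0, 0, 1] = s := by
  have hind : LinearIndependent ℂ ![m, l] := by
    rw [LinearIndependent.pair_iff' hm0]
    intro t ht
    exact hlm t ht.symm
  rw [← crossProduct_ne_zero_iff_linearIndependent] at hind
  obtain ⟨i, hi⟩ := Function.ne_iff.mp hind
  set r : Fin 3 → ℂ := Pi.single i 1 - s i • m with hr
  set N : Matrix (Fin 3) (Fin 3) ℂ := Matrix.of ![r, l, m] with hN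
  have hrs : ∑ j, r j * s j = 0 := by
    have : ∑ j, r j * s j = s i - s i * ∑ j, m j * s j := by
      simp [hr, sub_mul, Finset.sum_sub_distrib, Finset.mul_sum, Pi.single_apply, mul_assoc]
    rw [this, hms]; ring
  have hdet : N.det ≠ 0 := by
    intro h0
    apply hi
    rw [hN, Matrix.det_fin_three] at h0
    rw [cross_apply]
    fin_cases i <;> simp [hr] at h0 ⊢ <;> linear_combination -h0
  have hu : IsUnit N.det := isUnit_iff_ne_zero.mpr hdet
  have hNM := Matrix.mul_nonsing_inv N hu
  have hMN := Matrix.nonsing_inv_mul N hu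
  refine ⟨N⁻¹, N, hMN, hNM, ?_, ?_, ?_⟩
  · have : Matrix.vecMul l N⁻¹ = (N * N⁻¹) 1 := by
      rw [Matrix.mul_apply_eq_vecMul]; rfl
    rw [this, hNM]
    funext j; fin_cases j <;> simp [Matrix.one_apply]
  · have : Matrix.vecMul m N⁻¹ = (N * N⁻¹) 2 := by
      rw [Matrix.mul_apply_eq_vecMul]; rfl
    rw [this, hNM]
    funext j; fin_cases j <;> simp [Matrix.one_apply]
  · have : N.mulVec s = ![0, 0, 1] := by
      funext j
      fin_cases j
      · simpa [hN, Matrix.mulVec, dotProduct] using hrs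
      · simpa [hN, Matrix.mulVec, dotProduct] using hls
      · simpa [hN, Matrix.mulVec, dotProduct] using hms
    rw [← this, Matrix.mulVec_mulVec, hMN, Matrix.one_mulVec]

theorem core' {d : ℕ} (hd : 1 ≤ d) {w : Fin 3 → P3} (hF : Fol d w)
    {L : Fin (3 * d) → Fin 3 → ℂ} (hinv : ∀ i, Inv3 w (L i))
    (hnp : ∀ i j, i ≠ j → ∀ t : ℂ, L i ≠ t • L j) {k j : Fin (3 * d)} {s : Fin 3 → ℂ}
    (hk : ∑ i, L k i * s i = 0) (hj : ∑ i, L j i * s i ≠ 0)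
    (hs : ∀ i, eval s (w i) = 0) :
    ∃ v f : Fin 3 → ℂ, ∑ i, L k i * v i = 0 ∧ ∑ m, f m * dird (w m) s v ≠ 0 := by
  have hkj : k ≠ j := by rintro rfl; exact hj hk
  set c := ∑ i, L j i * s i with hc
  set s' : Fin 3 → ℂ := c⁻¹ • s with hs'
  obtain ⟨M, N, hMN, hNM, h1, h2, h3⟩ := exists_frame (l := L k) (m := L j) (s := s')
    (hinv j).1 (hnp k j hkj)
    (by
      have : ∑ i, L k i * s' i = c⁻¹ * ∑ i, L k i * s i := by
        rw [Finset.mul_sum]; exact Finset.sum_congr rfl fun i _ => by simp [hs']; ring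
      rw [this, hk, mul_zero])
    (by
      have : ∑ i, L j i * s' i = c⁻¹ * ∑ i, L j i * s i := by
        rw [Finset.mul_sum]; exact Finset.sum_congr rfl fun i _ => by simp [hs']; ring
      rw [this, ← hc, inv_mul_cancel₀ hj])
  have hs0 : ∀ i, eval s' (w i) = 0 := by
    intro i
    rw [hs', eval_smul_homog (hF.1 i), hs, mul_zero]
  have hcore := core hd (Fol_trans hF hMN hNM) (L := fun i => Matrix.vecMul (L i) M)
    (fun i => Inv_trans (hinv i) hMN)
    (by
      intro a b hab t ht
      apply hnp a b hab t
      apply vecMul_ne hMN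
      rw [ht, Matrix.smul_vecMul]) hkj h1 h2
    (by
      simp [wT, map_sum, eval_sub, h3, hs0])
  refine ⟨M.mulVec ![1, 0, 0], fun m => M m 1, ?_, ?_⟩
  · have := Matrix.dotProduct_mulVec (L k) M ![1, 0, 0]
    rw [h1] at this
    simpa [dotProduct, Fin.sum_univ_three] using this
  · have e1 : eval ![0, 0, 1] (pderiv 0 (wT M w 1)) =
        ∑ m, M m 1 * dird (w m) s' (M.mulVec ![1, 0, 0]) := by
      unfold wT
      rw [map_sum, map_sum]
      refine Finset.sum_congr rfl fun m _ => ?_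
      rw [pderiv_C_mul, ← h3, ← dird_sub, map_mul, eval_C]
      simp [dird, Fin.sum_univ_three]
    have e2 : ∀ m v, dird (w m) s' v = c⁻¹ ^ d * dird (w m) s v := by
      intro m v
      unfold dird
      rw [Finset.mul_sum]
      refine Finset.sum_congr rfl fun i _ => ?_
      have := (hF.1 m).pderiv (i := i)
      rw [hs', eval_smul_homog this, Nat.add_sub_cancel]
      ring
    intro h0
    apply hcore
    rw [e1]
    simp only [e2]
    have h4 := congrArg (fun x => c⁻¹ ^ d * x) h0
    simp only [mul_zero, Finset.mul_sum] at h4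
    refine Eq.trans (Finset.sum_congr rfl fun i _ => ?_) h4
    ring

lemma pencil_aux {d : ℕ} (hd : 1 ≤ d) {a b c : P3} (hb : b.IsHomogeneous (d + 1))
    (hcop : ∀ p : P3, p ∣ a → p ∣ b → p ∣ c → IsUnit p) {i j k : Fin 3} (hij : i ≠ j)
    (hik : i ≠ k) (hjk : j ≠ k) (hE : X i * a + X j * b + X k * c = 0) {α β γ : ℂ}
    (hγ : γ ≠ 0) (hs : C α * a + C β * b + C γ * c = 0) : False := by
  set p : P3 := C γ * X i - C α * X k with hp
  set q : P3 := C γ * X j - C β * X k with hq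
  have hpl : p = lin (Pi.single i γ - Pi.single k α) := by
    rw [lin_eq_sum]
    simp [hp, sub_mul, Finset.sum_sub_distrib, Pi.single_apply, apply_ite (C : ℂ → P3), ite_mul]
  have hl0 : (Pi.single i γ - Pi.single k α : Fin 3 → ℂ) ≠ 0 := by
    intro h
    have := congrFun h i
    simp [Pi.single_apply, hik] at this
    exact hγ this
  have hpp : Prime p := hpl ▸ lin_prime hl0
  have hpq : ¬ p ∣ q := by
    rintro ⟨r, hr⟩
    have := congrArg (eval (fun m => if m = i then α else if m = k then γ else β + 1)) hr
    simp [hp, hq, hik.symm, hij.symm, hjk] at this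
    apply hγ
    linear_combination this
  have hrel : p * a + q * b = 0 := by
    rw [hp, hq]
    linear_combination C γ * hE - X k * hs
  have h1 : p ∣ b := by
    have : p ∣ q * b := ⟨-a, by linear_combination hrel⟩
    exact (hpp.dvd_or_dvd this).resolve_left hpq
  obtain ⟨g, hg⟩ := h1
  have h2 : a = -q * g := by
    apply mul_left_cancel₀ hpp.ne_zero
    rw [hg] at hrel
    linear_combination hrel
  have hga : g ∣ a := ⟨-q, by rw [h2]; ring⟩
  have hgb : g ∣ b := ⟨p, by rw [hg]; ring⟩
  have hgc : g ∣ c := by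
    have h3 : g ∣ C γ * c := by
      have : C γ * c = -(C α * a + C β * b) := by linear_combination hs
      rw [this]
      exact (dvd_add (hga.mul_left _) (hgb.mul_left _)).neg_right
    have h4 : c = C γ⁻¹ * (C γ * c) := by
      rw [← mul_assoc, ← C_mul, inv_mul_cancel₀ hγ]; simp
    rw [h4]
    exact h3.mul_left _
  have hu := hcop g hga hgb hgc
  have hb0 : b ≠ 0 := by
    rw [hg]; exact mul_ne_zero hpp.ne_zero hu.ne_zero
  have hdeg := hb.totalDegree hb0
  obtain ⟨e, he, hge⟩ := MvPolynomial.isUnit_iff_eq_C_of_isReduced.mp hu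
  have hpd : p.totalDegree = 1 := by
    rw [hpl]; exact (lin_homog _).totalDegree (lin_ne_zero hl0)
  have : b.totalDegree ≤ 1 := by
    rw [hg, hge]
    refine (totalDegree_mul _ _).trans ?_
    rw [hpd]; simp
  omega

lemma exists_off {d : ℕ} (hd : 1 ≤ d) {w : Fin 3 → P3} (hF : Fol d w)
    {L : Fin (3 * d) → Fin 3 → ℂ} (hinv : ∀ i, Inv3 w (L i))
    (hnp : ∀ i j, i ≠ j → ∀ t : ℂ, L i ≠ t • L j) {s : Fin 3 → ℂ} (hs0 : s ≠ 0) :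
    ∃ j, ∑ i, L j i * s i ≠ 0 := by
  by_contra! hall
  have hdvd := prod_lin_dvd Finset.univ L (fun i _ => (hinv i).1) (fun i _ j _ => hnp i j)
    (∑ j, C (s j) * w j) (fun i _ => lin_dvd_contr (hinv i) s (hall i))
  have hdeg := prod_lin_deg Finset.univ L (fun i _ => (hinv i).1)
  have hz : ∑ j, C (s j) * w j = 0 := by
    by_contra h0
    have h1 : (∑ j, C (s j) * w j).IsHomogeneous (d + 1) := by
      apply IsHomogeneous.sum
      intro j _
      simpa using (isHomogeneous_C (Fin 3) (s j)).mul (hF.1 j)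
    have h2 := h1.totalDegree h0
    obtain ⟨g, hg⟩ := hdvd
    have hg0 : g ≠ 0 := by rintro rfl; simp [hg] at h0
    have h3 := totalDegree_mul_of_isDomain (prod_lin_ne_zero Finset.univ L
      (fun i _ => (hinv i).1)) hg0
    rw [← hg, h2, hdeg] at h3
    simp at h3
    omega
  have hE := hF.2.2
  rw [Fin.sum_univ_three] at hz hE
  obtain ⟨i, hi⟩ := Function.ne_iff.mp hs0
  simp only [Pi.zero_apply] at hi
  have hc' : ∀ p : P3, p ∣ w 0 → p ∣ w 1 → p ∣ w 2 → IsUnit p := by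
    intro p h0 h1 h2
    apply hF.2.1
    intro i
    fin_cases i <;> assumption
  fin_cases i
  · exact pencil_aux hd (hF.1 1) (a := w 2) (c := w 0) (fun p a b c => hc' p c b a)
      (i := 2) (j := 1) (k := 0) (by decide) (by decide) (by decide)
      (by linear_combination hE) hi (α := s 2) (β := s 1) (γ := s 0) (by linear_combination hz)
  · exact pencil_aux hd (hF.1 2) (a := w 0) (c := w 1) (fun p a b c => hc' p a c b)
      (i := 0) (j := 2) (k := 1) (by decide) (by decide) (by decide)
      (by linear_combination hE) hi (α := s 0) (β := s 2) (γ := s 1) (by linear_combination hz)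
  · exact pencil_aux hd (hF.1 1) (a := w 0) (c := w 2) (fun p a b c => hc' p a b c)
      (i := 0) (j := 1) (k := 2) (by decide) (by decide) (by decide)
      (by linear_combination hE) hi (α := s 0) (β := s 1) (γ := s 2) (by linear_combination hz)

lemma T_self {d : ℕ} {w : Fin 3 → P3} (hF : Fol d w) {s : Fin 3 → ℂ}
    (hs : ∀ i, eval s (w i) = 0) (m : Fin 3) : dird (w m) s s = 0 := by
  have := congrArg (eval s) ((hF.1 m).sum_X_mul_pderiv)
  simpa [dird, hs] using this

lemma T_tan {w : Fin 3 → P3} {l : Fin 3 → ℂ} (h : Inv3 w l) {s u v : Fin 3 → ℂ}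
    (hs : ∑ i, l i * s i = 0) (hu : ∑ i, l i * u i = 0) (hv : ∑ i, l i * v i = 0) :
    ∑ m, u m * dird (w m) s v = 0 := by
  obtain ⟨g, hg⟩ := lin_dvd_contr h u hu
  have h1 : ∑ m, u m * dird (w m) s v = ∑ i, v i * eval s (pderiv i (∑ j, C (u j) * w j)) := by
    simp only [dird, map_sum, pderiv_C_mul, map_mul, eval_C, Finset.mul_sum]
    rw [Finset.sum_comm]
    refine Finset.sum_congr rfl fun i _ => Finset.sum_congr rfl fun j _ => by ring
  rw [h1, hg]
  have h2 : ∀ i, v i * eval s (pderiv i (lin l * g)) = l i * v i * eval s g := by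
    intro i
    rw [Derivation.leibniz, pderiv_lin]
    simp [eval_lin, hs]
    ring
  simp only [h2]
  rw [← Finset.sum_mul, hv, zero_mul]

/-- elements of the kernel of `l` are combinations of two independent ones -/
lemma ker_span {l s q v : Fin 3 → ℂ} (hl : l ≠ 0) (hs : ∑ i, l i * s i = 0)
    (hq : ∑ i, l i * q i = 0) (hv : ∑ i, l i * v i = 0)
    (hind : LinearIndependent ℂ ![s, q]) : ∃ x y : ℂ, v = x • s + y • q := by
  by_contra! hno
  have h3 : LinearIndependent ℂ ![s, q, v] := by
    have := LinearIndependent.pair_iff.mp hind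
    rw [Fintype.linearIndependent_iff]
    intro g hg
    simp [Fin.sum_univ_three] at hg
    have h2 : g 2 = 0 := by
      by_contra h
      apply hno (-(g 2)⁻¹ * g 0) (-(g 2)⁻¹ * g 1)
      have : v = (g 2)⁻¹ • (g 2 • v) := by rw [smul_smul, inv_mul_cancel₀ h, one_smul]
      rw [this, ← sub_eq_zero]
      have e : g 2 • v = - (g 0 • s + g 1 • q) := by
        rw [eq_neg_iff_add_eq_zero, ← hg]; abel
      rw [e]
      module
    rw [h2] at hg
    obtain ⟨h0, h1⟩ := this (g 0) (g 1) (by simpa using hg)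
    intro i
    fin_cases i <;> assumption
  have hM : LinearIndependent ℂ (Matrix.of ![s, q, v]).row := h3
  rw [Matrix.linearIndependent_rows_iff_isUnit] at hM
  apply hl
  have h0 : (Matrix.of ![s, q, v]).mulVec l = 0 := by
    funext i
    fin_cases i <;> simp [Matrix.mulVec, dotProduct, mul_comm, hs, hq, hv]
  exact (Matrix.mulVec_injective_iff_isUnit.mpr hM) (by rw [h0, Matrix.mulVec_zero])

lemma T_ne {d : ℕ} (hd : 1 ≤ d) {w : Fin 3 → P3} (hF : Fol d w)
    {L : Fin (3 * d) → Fin 3 → ℂ} (hinv : ∀ i, Inv3 w (L i))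
    (hnp : ∀ i j, i ≠ j → ∀ t : ℂ, L i ≠ t • L j) {k : Fin (3 * d)} {s q f0 : Fin 3 → ℂ}
    (hk : ∑ i, L k i * s i = 0) (hs : ∀ i, eval s (w i) = 0)
    (hq : ∑ i, L k i * q i = 0) (hind : LinearIndependent ℂ ![s, q])
    (hf0 : ∑ i, L k i * f0 i ≠ 0) : ∑ m, f0 m * dird (w m) s q ≠ 0 := by
  have hs0 : s ≠ 0 := hind.ne_zero 0
  obtain ⟨j, hj⟩ := exists_off hd hF hinv hnp hs0
  obtain ⟨v, f, hv, hf⟩ := core' hd hF hinv hnp hk hj hs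
  obtain ⟨x, y, rfl⟩ := ker_span (hinv k).1 hk hq hv hind
  intro h0
  apply hf
  have e1 : ∀ m, dird (w m) s (x • s + y • q) = y * dird (w m) s q := by
    intro m
    have : dird (w m) s (x • s + y • q) = x * dird (w m) s s + y * dird (w m) s q := by
      simp only [dird, Finset.mul_sum, ← Finset.sum_add_distrib]
      refine Finset.sum_congr rfl fun i _ => by simp; ring
    rw [this, T_self hF hs]; ring
  simp only [e1]
  set c := (∑ i, L k i * f i) / (∑ i, L k i * f0 i) with hc
  have hcc : c * (∑ i, L k i * f0 i) = ∑ i, L k i * f i := div_mul_cancel₀ _ hf0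
  have h4 := T_tan (hinv k) hk (u := f - c • f0) (by
    simp only [Pi.sub_apply, Pi.smul_apply, smul_eq_mul, mul_sub, Finset.sum_sub_distrib]
    rw [← hcc, Finset.mul_sum, sub_eq_zero]
    exact Finset.sum_congr rfl fun i _ => by ring) hq
  have h5 : ∑ m, f m * (y * dird (w m) s q) = y * (∑ m, (f - c • f0) m * dird (w m) s q)
      + y * c * ∑ m, f0 m * dird (w m) s q := by
    simp only [Finset.mul_sum, ← Finset.sum_add_distrib]
    refine Finset.sum_congr rfl fun i _ => by simp; ring
  rw [h5, h4, h0]; ring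

lemma line_deg {f : P3} {n : ℕ} (hf : f.IsHomogeneous n) (g q : Fin 3 → ℂ) :
    (aeval (fun i => Polynomial.C (g i) + Polynomial.X * Polynomial.C (q i)) f :
      Polynomial ℂ).natDegree ≤ n ∧
    (aeval (fun i => Polynomial.C (g i) + Polynomial.X * Polynomial.C (q i)) f :
      Polynomial ℂ).coeff n = eval q f := by
  have hd1 : ∀ i, (Polynomial.C (g i) + Polynomial.X * Polynomial.C (q i)).natDegree ≤ 1 := by
    intro i
    compute_degree
  have hc1 : ∀ i, (Polynomial.C (g i) + Polynomial.X * Polynomial.C (q i)).coeff 1 = q i := by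
    intro i
    simp [Polynomial.coeff_C]
  have hdp : ∀ i k, ((Polynomial.C (g i) + Polynomial.X * Polynomial.C (q i)) ^ k).natDegree
      ≤ k := by
    intro i k
    simpa using Polynomial.natDegree_pow_le_of_le k (hd1 i)
  have hcp : ∀ i k, ((Polynomial.C (g i) + Polynomial.X * Polynomial.C (q i)) ^ k).coeff k
      = q i ^ k := by
    intro i k
    have := Polynomial.coeff_pow_of_natDegree_le (m := k) (hd1 i)
    rw [hc1, mul_one] at this
    exact this
  have hsum : ∀ m ∈ f.support, m 0 + m 1 + m 2 = n := by
    intro m hm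
    have := hf (mem_support_iff.mp hm)
    rw [Finsupp.weight_apply, Finsupp.sum_fintype _ _ (by simp)] at this
    simpa [Fin.sum_univ_three] using this
  rw [aeval_def, eval₂_eq', Polynomial.finsetSum_coeff]
  constructor
  · apply Polynomial.natDegree_sum_le_of_forall_le
    intro m hm
    refine (Polynomial.natDegree_C_mul_le _ _).trans ?_
    rw [Fin.prod_univ_three, ← hsum m hm]
    exact Polynomial.natDegree_mul_le_of_le (Polynomial.natDegree_mul_le_of_le (hdp _ _) (hdp _ _))
      (hdp _ _)
  · rw [eval_eq']
    refine Finset.sum_congr rfl fun m hm => ?_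
    have : (algebraMap ℂ (Polynomial ℂ)) (coeff m f) = Polynomial.C (coeff m f) := rfl
    rw [this, Polynomial.coeff_C_mul, Fin.prod_univ_three, Fin.prod_univ_three, ← hsum m hm,
      Polynomial.coeff_mul_add_eq_of_natDegree_le (Polynomial.natDegree_mul_le_of_le (hdp _ _) (hdp _ _))
      (hdp _ _), Polynomial.coeff_mul_add_eq_of_natDegree_le (hdp _ _) (hdp _ _), hcp, hcp, hcp]

lemma deriv_line (f : P3) (s v : Fin 3 → ℂ) (t : ℂ) :
    (Polynomial.derivative (aeval (fun i => Polynomial.C (s i) +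
      Polynomial.X * Polynomial.C (v i)) f)).eval t = dird f (s + t • v) v := by
  rw [chain_rule, Polynomial.eval_finsetSum]
  refine Finset.sum_congr rfl fun i _ => ?_
  rw [Polynomial.eval_mul, eval_line]
  simp
  ring

lemma exists_indep {l q : Fin 3 → ℂ} (hl : l ≠ 0) (hq : q ≠ 0) :
    ∃ g : Fin 3 → ℂ, ∑ i, l i * g i = 0 ∧ LinearIndependent ℂ ![g, q] := by
  by_contra! hno
  have h1 : ∀ g : Fin 3 → ℂ, ∑ i, l i * g i = 0 → ∃ a : ℂ, a • q = g := by
    intro g hg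
    by_contra! h
    apply hno g hg
    have := (LinearIndependent.pair_iff' hq).mpr h
    rwa [LinearIndependent.pair_symm_iff] at this
  obtain ⟨a, ha⟩ := h1 ![0, l 2, -l 1] (by simp [Fin.sum_univ_three]; ring)
  obtain ⟨b, hb⟩ := h1 ![-l 2, 0, l 0] (by simp [Fin.sum_univ_three]; ring)
  obtain ⟨c, hc⟩ := h1 ![l 1, -l 0, 0] (by simp [Fin.sum_univ_three]; ring)
  have a0 := congrFun ha 0
  have a1 := congrFun ha 1
  have a2 := congrFun ha 2
  have b0 := congrFun hb 0
  have b1 := congrFun hb 1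
  have b2 := congrFun hb 2
  have c0 := congrFun hc 0
  have c1 := congrFun hc 1
  have c2 := congrFun hc 2
  simp at a0 a1 a2 b0 b1 b2 c0 c1 c2
  obtain ⟨i, hi⟩ := Function.ne_iff.mp hq
  simp only [Pi.zero_apply] at hi
  have hall : l 0 = 0 ∧ l 1 = 0 ∧ l 2 = 0 := by
    have hi' : q 0 ≠ 0 ∨ q 1 ≠ 0 ∨ q 2 ≠ 0 := by
      fin_cases i
      · exact Or.inl hi
      · exact Or.inr (Or.inl hi)
      · exact Or.inr (Or.inr hi)
    grind
  apply hl
  funext i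
  fin_cases i
  · exact hall.1
  · exact hall.2.1
  · exact hall.2.2

lemma sing_points {d : ℕ} (hd : 1 ≤ d) {w : Fin 3 → P3} (hF : Fol d w)
    {L : Fin (3 * d) → Fin 3 → ℂ} (hinv : ∀ i, Inv3 w (L i))
    (hnp : ∀ i j, i ≠ j → ∀ t : ℂ, L i ≠ t • L j) (k : Fin (3 * d)) :
    ∃ S : Finset PP2, (∀ p : PP2, p ∈ S ↔
      (∀ i, eval p.rep (w i) = 0) ∧ ∑ i, L k i * p.rep i = 0) ∧ S.card = d + 1 := by
  classical
  have hl := (hinv k).1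
  obtain ⟨i₀, hi₀⟩ := Function.ne_iff.mp hl
  simp only [Pi.zero_apply] at hi₀
  have hz : ∀ p : Fin 3 → ℂ, ∑ i, L k i * p i = 0 → eval p (w i₀) = 0 →
      ∀ i, eval p (w i) = 0 := by
    intro p hp h0 i
    obtain ⟨r, hr⟩ := (hinv k).2 i₀ i
    have := congrArg (eval p) hr
    simp [eval_lin, hp, h0] at this
    exact this.resolve_left hi₀
  obtain ⟨q, hq, hqn⟩ : ∃ q : Fin 3 → ℂ, ∑ i, L k i * q i = 0 ∧ eval q (w i₀) ≠ 0 := by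
    by_contra! hno
    apply (lin_prime hl).not_isUnit
    apply hF.2.1
    intro i
    exact lin_dvd_of_vanish hl _ fun p hp => hz p hp (hno p hp) i
  have hq0 : q ≠ 0 := by
    rintro rfl
    apply hqn
    have := eval_smul_homog (hF.1 i₀) 0 0
    simpa using this
  obtain ⟨g, hg, hind⟩ := exists_indep hl hq0
  have hker : ∀ t : ℂ, ∑ i, L k i * (g + t • q) i = 0 := by
    intro t
    have : ∑ i, L k i * (g + t • q) i = ∑ i, L k i * g i + t * ∑ i, L k i * q i := by
      rw [Finset.mul_sum, ← Finset.sum_add_distrib]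
      exact Finset.sum_congr rfl fun i _ => by simp; ring
    rw [this, hg, hq]; ring
  have hpair := LinearIndependent.pair_iff.mp hind
  have hind' : ∀ t : ℂ, LinearIndependent ℂ ![g + t • q, q] := by
    intro t
    rw [LinearIndependent.pair_iff]
    intro x y hxy
    obtain ⟨h1, h2⟩ := hpair x (x * t + y) (by rw [← hxy]; module)
    refine ⟨h1, ?_⟩
    rw [h1] at h2
    simpa using h2
  have hne : ∀ t : ℂ, g + t • q ≠ 0 := fun t => (hind' t).ne_zero 0
  set P : Polynomial ℂ := aeval (fun i => Polynomial.C (g i) +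
    Polynomial.X * Polynomial.C (q i)) (w i₀) with hP
  obtain ⟨hdeg, hco⟩ := line_deg (hF.1 i₀) g q
  rw [← hP] at hdeg hco
  have hco' : P.coeff (d + 1) ≠ 0 := by rw [hco]; exact hqn
  have hnd : P.natDegree = d + 1 := le_antisymm hdeg (Polynomial.le_natDegree_of_ne_zero hco')
  have hP0 : P ≠ 0 := by
    intro h
    apply hco'
    rw [h]; simp
  have hnodup : P.roots.Nodup := by
    rw [Multiset.nodup_iff_count_le_one]
    intro t
    rw [Polynomial.count_roots]
    by_contra! hgt
    obtain ⟨h2, h1⟩ := (Polynomial.one_lt_rootMultiplicity_iff_isRoot hP0).mp hgt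
    rw [Polynomial.IsRoot.def, hP, eval_line] at h2
    rw [Polynomial.IsRoot.def, hP, deriv_line] at h1
    have := T_ne hd hF hinv hnp (hker t) (hz _ (hker t) h2) hq (hind' t)
      (f0 := Pi.single i₀ 1) (by simpa [Pi.single_apply] using hi₀)
    apply this
    simpa [Pi.single_apply] using h1
  have hcard : P.roots.toFinset.card = d + 1 := by
    rw [Multiset.toFinset_card_of_nodup hnodup, IsAlgClosed.card_roots_eq_natDegree, hnd]
  have hroot : ∀ t, t ∈ P.roots.toFinset ↔ eval (g + t • q) (w i₀) = 0 := by
    intro t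
    rw [Multiset.mem_toFinset, Polynomial.mem_roots hP0, Polynomial.IsRoot.def, hP, eval_line]
  refine ⟨P.roots.toFinset.image fun t => Projectivization.mk ℂ (g + t • q) (hne t), ?_, ?_⟩
  · intro p
    rw [Finset.mem_image]
    constructor
    · rintro ⟨t, ht, rfl⟩
      rw [hroot] at ht
      obtain ⟨a, ha⟩ := Projectivization.exists_smul_eq_mk_rep ℂ (g + t • q) (hne t)
      rw [← ha, Units.smul_def]
      constructor
      · intro i
        rw [eval_smul_homog (hF.1 i), hz _ (hker t) ht, mul_zero]
      · have := hker t
        simp only [Pi.smul_apply, smul_eq_mul, mul_left_comm, ← Finset.mul_sum]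
        rw [this, mul_zero]
    · rintro ⟨h1, h2⟩
      obtain ⟨x, y, hxy⟩ := ker_span hl hg hq h2 hind
      have hx : x ≠ 0 := by
        rintro rfl
        rw [zero_smul, zero_add] at hxy
        have h3 := h1 i₀
        rw [hxy, eval_smul_homog (hF.1 i₀)] at h3
        have hy : y ≠ 0 := by
          rintro rfl
          exact p.rep_nonzero (by rw [hxy, zero_smul])
        exact (mul_ne_zero (pow_ne_zero _ hy) hqn) h3
      have hp' : p.rep = x • (g + (y / x) • q) := by
        rw [hxy, smul_add, smul_smul, mul_div_cancel₀ _ hx]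
      refine ⟨y / x, ?_, ?_⟩
      · rw [hroot]
        have h3 := h1 i₀
        rw [hp', eval_smul_homog (hF.1 i₀)] at h3
        exact (mul_eq_zero.mp h3).resolve_left (pow_ne_zero _ hx)
      · rw [← p.mk_rep, Projectivization.mk_eq_mk_iff']
        refine ⟨x⁻¹, ?_⟩
        rw [hp', smul_smul, inv_mul_cancel₀ hx, one_smul]
  · rw [Finset.card_image_of_injective, hcard]
    intro t u htu
    simp only at htu
    rw [Projectivization.mk_eq_mk_iff'] at htu
    obtain ⟨a, ha⟩ := htu
    obtain ⟨h1, h2⟩ := hpair (a - 1) (a * u - t) (by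
      rw [← sub_eq_zero] at ha
      rw [← ha]; module)
    have : a = 1 := by linear_combination h1
    rw [this] at h2
    linear_combination -h2

/-- Two distinct lines meet in a unique point. -/
lemma meet {l m : Fin 3 → ℂ} (hm : m ≠ 0) (hlm : ∀ t : ℂ, l ≠ t • m) :
    ∃ p : PP2, (∑ i, l i * p.rep i = 0 ∧ ∑ i, m i * p.rep i = 0) ∧
      ∀ p' : PP2, ∑ i, l i * p'.rep i = 0 → ∑ i, m i * p'.rep i = 0 → p' = p := by
  have hind : LinearIndependent ℂ ![m, l] := by
    rw [LinearIndependent.pair_iff' hm]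
    intro t ht
    exact hlm t ht.symm
  have hx := hind
  rw [← crossProduct_ne_zero_iff_linearIndependent] at hx
  set v := crossProduct m l with hv
  obtain ⟨a, ha⟩ := Projectivization.exists_smul_eq_mk_rep ℂ v hx
  have h1 : ∀ y : Fin 3 → ℂ, ∑ i, y i * v i = 0 → ∑ i, y i * (a • v) i = 0 := by
    intro y hy
    rw [Units.smul_def]
    simp only [Pi.smul_apply, smul_eq_mul, mul_left_comm, ← Finset.mul_sum]
    rw [hy, mul_zero]
  have hlv : ∑ i, l i * v i = 0 := by
    simp [hv, cross_apply, Fin.sum_univ_three]; ring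
  have hmv : ∑ i, m i * v i = 0 := by
    simp [hv, cross_apply, Fin.sum_univ_three]; ring
  refine ⟨Projectivization.mk ℂ v hx, ⟨?_, ?_⟩, ?_⟩
  · rw [← ha]; exact h1 l hlv
  · rw [← ha]; exact h1 m hmv
  · intro p' hl' hm'
    rw [← p'.mk_rep, Projectivization.mk_eq_mk_iff']
    by_contra! hno'
    have hno : ∀ a : ℂ, a • v ≠ p'.rep := hno'
    have hi2 := (LinearIndependent.pair_iff' hx).mpr hno
    have hl : l ≠ 0 := fun h => hlm 0 (by rw [h, zero_smul])
    have hdv : lin l ∣ lin m := by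
      refine lin_dvd_of_vanish hl _ fun u hu => ?_
      obtain ⟨x, y, rfl⟩ := ker_span hl hlv hl' hu hi2
      rw [eval_lin]
      have : ∑ i, m i * (x • v + y • p'.rep) i
          = x * ∑ i, m i * v i + y * ∑ i, m i * p'.rep i := by
        simp only [Finset.mul_sum, ← Finset.sum_add_distrib]
        exact Finset.sum_congr rfl fun i _ => by simp; ring
      rw [this, hmv, hm']; ring
    obtain ⟨t, ht⟩ := smul_of_lin_dvd hdv hm
    have ht0 : t ≠ 0 := by
      rintro rfl
      exact hm (by rw [ht, zero_smul])
    exact hlm t⁻¹ (by rw [ht, smul_smul, inv_mul_cancel₀ ht0, one_smul])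

/-- For a reduced convex foliation `F` of degree `d ≥ 1` and any one of its `3d`
invariant lines `{ℓ = 0}`, there are exactly `d+1` singular points of `F` on that line,
and `Σ_s (σ(F,s) − 1) = 3d − 1`, where `σ(F,s)` is the number of the `3d` invariant
lines through `s`. -/
theorem reduced_convex_sum_sigma
    (d : ℕ) (hd : 1 ≤ d) (a b c : P3) (hfol : IsFoliation d a b c)
    (L : Fin (3 * d) → (Fin 3 → ℂ))
    (hinv : ∀ i, InvLine a b c (L i))
    (hnp : ∀ i j, i ≠ j → ∀ t : ℂ, L i ≠ t • L j)
    (k : Fin (3 * d)) :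
    ∃ S : Finset PP2,
      (∀ p : PP2, p ∈ S ↔ (IsSingOn a b c p ∧ OnLine (L k) p)) ∧
      S.card = d + 1 ∧
      ∑ p ∈ S, (({i : Fin (3 * d) | OnLine (L i) p}.ncard : ℤ) - 1) = 3 * d - 1 := by
  classical
  set w : Fin 3 → P3 := ![a, b, c] with hw
  have hF : Fol d w := by
    obtain ⟨ha, hb, hc, hcop, hE⟩ := hfol
    refine ⟨?_, ?_, ?_⟩
    · intro i
      fin_cases i
      · exact ha
      · exact hb
      · exact hc
    · intro p hp
      exact hcop p (hp 0) (hp 1) (hp 2)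
    · rw [Fin.sum_univ_three]
      exact hE
  have hI : ∀ i, Inv3 w (L i) := by
    intro i
    obtain ⟨h0, h1, h2, h3⟩ := hinv i
    refine ⟨h0, ?_⟩
    intro r s
    have key : ∀ x y z : P3, lin (L i) ∣ x - y → z = y - x → lin (L i) ∣ z := by
      intro x y z h hz
      rw [hz, ← neg_sub]
      exact h.neg_right
    fin_cases r <;> fin_cases s
    · simp
    · exact key _ _ _ h1 rfl
    · exact key _ _ _ h2 rfl
    · exact h1
    · simp
    · exact key _ _ _ h3 rfl
    · exact h2
    · exact h3
    · simp
  obtain ⟨S, hS, hcard⟩ := sing_points hd hF hI hnp k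
  have hsing : ∀ p : PP2, IsSingOn a b c p ↔ ∀ i, eval p.rep (w i) = 0 := by
    intro p
    constructor
    · rintro ⟨h0, h1, h2⟩ i
      fin_cases i
      · exact h0
      · exact h1
      · exact h2
    · intro h
      exact ⟨h 0, h 1, h 2⟩
  refine ⟨S, ?_, hcard, ?_⟩
  · intro p
    rw [hS, hsing]
    rfl
  have hterm : ∀ p ∈ S, (({i : Fin (3 * d) | OnLine (L i) p}.ncard : ℤ) - 1) =
      ∑ i ∈ Finset.univ.erase k, if OnLine (L i) p then (1 : ℤ) else 0 := by
    intro p hp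
    have hk : OnLine (L k) p := ((hS p).mp hp).2
    have h1 : {i : Fin (3 * d) | OnLine (L i) p}.ncard =
        (Finset.univ.filter fun i => OnLine (L i) p).card := by
      rw [← Set.ncard_coe_finset]
      congr 1
      ext i
      simp
    have h2 : ((Finset.univ.filter fun i => OnLine (L i) p).card : ℤ) =
        ∑ i, if OnLine (L i) p then (1 : ℤ) else 0 := by
      rw [Finset.card_filter]
      push_cast
      rfl
    rw [h1, h2, ← Finset.add_sum_erase _ _ (Finset.mem_univ k), if_pos hk]
    ring
  rw [Finset.sum_congr rfl hterm, Finset.sum_comm]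
  have hone : ∀ i ∈ Finset.univ.erase k,
      ∑ p ∈ S, (if OnLine (L i) p then (1 : ℤ) else 0) = 1 := by
    intro i hi
    have hik : i ≠ k := Finset.ne_of_mem_erase hi
    obtain ⟨p, ⟨hp1, hp2⟩, hpu⟩ := meet (hI k).1 (hnp i k hik)
    have hpS : p ∈ S := by
      rw [hS]
      refine ⟨?_, hp2⟩
      by_contra hne
      push Not at hne
      obtain ⟨r, hr⟩ := hne
      have hprop : ∀ j : Fin (3 * d), ∑ m, L j m * p.rep m = 0 → ∀ m,
          L j r * eval p.rep (w m) = L j m * eval p.rep (w r) := by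
        intro j hj m
        obtain ⟨g, hg⟩ := (hI j).2 r m
        have := congrArg (eval p.rep) hg
        simp only [map_sub, map_mul, eval_C, eval_lin, hj, zero_mul] at this
        linear_combination this
      have hkr : L k r ≠ 0 := by
        intro h0
        apply (hI k).1
        funext m
        have := hprop k hp2 m
        rw [h0, zero_mul] at this
        exact (mul_eq_zero.mp this.symm).resolve_right hr
      apply hnp i k hik (L i r / L k r)
      funext m
      have e1 := hprop k hp2 m
      have e2 := hprop i hp1 m
      rw [Pi.smul_apply, smul_eq_mul, div_mul_eq_mul_div, eq_div_iff hkr]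
      apply mul_right_cancel₀ hr
      linear_combination L i r * e1 - L k r * e2
    rw [Finset.sum_eq_single_of_mem p hpS, if_pos (show OnLine (L i) p from hp1)]
    intro p' hp' hne
    rw [if_neg]
    intro h
    exact hne (hpu p' h ((hS p').mp hp').2)
  rw [Finset.sum_congr rfl hone]
  simp [Finset.card_erase_of_mem]
  omega
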